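/- arXiv:2403.13700 — 2 statements merged into one kernel-verified Lean document; each statement's English description precedes it below -/
import Mathlib

section
/- Let M : ℕ and let g : (Fin (M+1) → ℝ) → ℝ be the composition of stl_and_lt0 with the map sending a vector to the list of its coordinates. Then for every real p > 0 and every index i : Fin (M+1), the i-th partial derivative of g at the constant vector with value p exists and equals 1/(M+1). -/
open Filter Topology Real

/-- Minimum of a list of reals (`0` for the empty list). -/
noncomputable def listMin (a : List ℝ) : ℝ := a.min?.getD 0

/-- Maximum of a list of reals (`0` for the empty list). -/
noncomputable def listMax (a : List ℝ) : ℝ := a.max?.getD 0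

/-- STL conjunction, case `a_min < 0`. -/
noncomputable def stl_and_lt0 (ν : ℝ) (a : List ℝ) : ℝ :=
  (a.map fun x => listMin a * exp ((x - listMin a) / listMin a)
      * exp (ν * ((x - listMin a) / listMin a))).sum /
  (a.map fun x => exp (ν * ((x - listMin a) / listMin a))).sum

/-- STL conjunction, case `a_min > 0`. -/
noncomputable def stl_and_gt0 (ν : ℝ) (a : List ℝ) : ℝ :=
  (a.map fun x => x * exp (-(ν * ((x - listMin a) / listMin a)))).sum /
  (a.map fun x => exp (-(ν * ((x - listMin a) / listMin a)))).sum

/-- The STL conjunction `and_S`. -/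
noncomputable def and_S (ν : ℝ) (a : List ℝ) : ℝ :=
  if listMin a < 0 then stl_and_lt0 ν a
  else if 0 < listMin a then stl_and_gt0 ν a
  else 0

/-- The STL disjunction `or_S`. -/
noncomputable def or_S (ν : ℝ) (a : List ℝ) : ℝ :=
  if 0 < listMax a then
    (a.map fun x => listMax a * exp ((x - listMax a) / listMax a)
        * exp (ν * ((x - listMax a) / listMax a))).sum /
    (a.map fun x => exp (ν * ((x - listMax a) / listMax a))).sum
  else if listMax a < 0 then
    (a.map fun x => x * exp (-(ν * ((x - listMax a) / listMax a)))).sum /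
    (a.map fun x => exp (-(ν * ((x - listMax a) / listMax a)))).sum
  else 0

/-- The `i`-th partial derivative of `f` at `a` exists and equals `L`. -/
def HasPartialDeriv {n : ℕ} (f : (Fin n → ℝ) → ℝ) (a : Fin n → ℝ) (i : Fin n) (L : ℝ) : Prop :=
  Filter.Tendsto (fun h : ℝ => h⁻¹ * (f (a + h • (Pi.single i 1 : Fin n → ℝ)) - f a))
    (𝓝[≠] (0 : ℝ)) (𝓝 L)

/-- Auxiliary closed form with the minimum as a parameter. -/
noncomputable def auxG (ν p : ℝ) (M : ℕ) (m h : ℝ) : ℝ :=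
  (m * exp ((p + h - m) / m) * exp (ν * ((p + h - m) / m))
    + M * (m * exp ((p - m) / m) * exp (ν * ((p - m) / m)))) /
  (exp (ν * ((p + h - m) / m)) + M * exp (ν * ((p - m) / m)))

theorem aux_sum (M : ℕ) (p h : ℝ) (i : Fin (M + 1)) (F : ℝ → ℝ) :
    ((List.ofFn ((fun _ => p) + h • (Pi.single i 1 : Fin (M + 1) → ℝ))).map F).sum
      = F (p + h) + M * F p := by
  rw [List.map_ofFn, List.sum_ofFn, ← Finset.add_sum_erase _ _ (Finset.mem_univ i)]
  have : ∀ j ∈ Finset.univ.erase i,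
      (F ∘ ((fun _ => p) + h • (Pi.single i 1 : Fin (M + 1) → ℝ))) j = F p := by
    intro j hj
    have hj' := Finset.ne_of_mem_erase hj
    simp [hj']
  rw [Finset.sum_congr rfl this]
  simp

theorem aux_min (M : ℕ) (p h : ℝ) (i : Fin (M + 1)) :
    listMin (List.ofFn ((fun _ => p) + h • (Pi.single i 1 : Fin (M + 1) → ℝ))) = p ∨
    listMin (List.ofFn ((fun _ => p) + h • (Pi.single i 1 : Fin (M + 1) → ℝ))) = p + h := by
  set l := List.ofFn ((fun _ => p) + h • (Pi.single i 1 : Fin (M + 1) → ℝ)) with hl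
  have hmem : listMin l ∈ l := by
    unfold listMin
    cases hm : l.min? with
    | none =>
      rw [List.min?_eq_none_iff] at hm
      simp [hl] at hm
    | some a => exact List.min?_mem hm
  rw [hl, List.mem_ofFn] at hmem
  obtain ⟨j, hj⟩ := hmem
  rw [← hl] at hj
  rw [← hj]
  by_cases hji : j = i
  · subst hji; right; simp
  · left; simp [hji]

theorem aux_eval (ν p h : ℝ) (M : ℕ) (i : Fin (M + 1)) :
    stl_and_lt0 ν (List.ofFn ((fun _ => p) + h • (Pi.single i 1 : Fin (M + 1) → ℝ)))
      = auxG ν p M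
        (listMin (List.ofFn ((fun _ => p) + h • (Pi.single i 1 : Fin (M + 1) → ℝ)))) h := by
  unfold stl_and_lt0 auxG
  rw [aux_sum M p h i, aux_sum M p h i]

theorem aux_zero (ν p : ℝ) (M : ℕ) : auxG ν p M p 0 = p := by
  have : (1 + (M : ℝ)) ≠ 0 := by positivity
  simp [auxG]
  field_simp

theorem aux_derivR (ν p : ℝ) (hp : 0 < p) (M : ℕ) :
    HasDerivAt (fun h => auxG ν p M p h) (1 / (M + 1)) 0 := by
  have hM : (1 + (M : ℝ)) ≠ 0 := by positivity
  have hM' : ((M : ℝ) + 1) ≠ 0 := by positivity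
  have h1 : HasDerivAt (fun h : ℝ => (p + h - p) / p) (1 / p) 0 :=
    (((hasDerivAt_id (0 : ℝ)).const_add p).sub_const p).div_const p
  have h2 := h1.exp
  have h3 := (h1.const_mul ν).exp
  have hn := ((h2.const_mul p).mul h3).add_const
    (M * (p * exp ((p - p) / p) * exp (ν * ((p - p) / p))))
  have hd := h3.add_const (M * exp (ν * ((p - p) / p)))
  have := hn.div hd (by positivity)
  refine this.congr_deriv ?_
  simp
  field_simp
  ring

theorem aux_derivL (ν p : ℝ) (hp : 0 < p) (M : ℕ) :
    HasDerivAt (fun h => auxG ν p M (p + h) h) (1 / (M + 1)) 0 := by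
  have hM : (1 + (M : ℝ)) ≠ 0 := by positivity
  have hM' : ((M : ℝ) + 1) ≠ 0 := by positivity
  have hm : HasDerivAt (fun h : ℝ => p + h) 1 0 := (hasDerivAt_id (0 : ℝ)).const_add p
  have hp0 : p + 0 ≠ 0 := by simpa using hp.ne'
  have h0 := (hm.sub hm).div hm hp0
  have h1 := (hm.const_sub p).div hm hp0
  have hn := ((hm.mul h0.exp).mul (h0.const_mul ν).exp).add
    (((hm.mul h1.exp).mul (h1.const_mul ν).exp).const_mul (M : ℝ))
  have hd := (h0.const_mul ν).exp.add ((h1.const_mul ν).exp.const_mul (M : ℝ))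
  have := hn.div hd (by simp only [Pi.add_apply]; positivity)
  refine this.congr_deriv ?_
  simp
  field_simp
  ring

theorem shadowlifting_stl_and_lt0 (ν : ℝ) (hν : 0 < ν) (M : ℕ)
    (p : ℝ) (hp : 0 < p) (i : Fin (M + 1)) :
    HasPartialDeriv (stl_and_lt0 ν ∘ fun v : Fin (M + 1) → ℝ => List.ofFn v)
      (fun _ => p) i (1 / (M + 1)) := by
  classical
  have hR := (hasDerivAt_iff_tendsto_slope.1 (aux_derivR ν p hp M))
  have hL := (hasDerivAt_iff_tendsto_slope.1 (aux_derivL ν p hp M))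
  have h0 : stl_and_lt0 ν (List.ofFn (fun _ : Fin (M + 1) => p)) = p := by
    have h := aux_eval ν p 0 M i
    have hm := aux_min M p 0 i
    simp only [add_zero, or_self] at hm
    rw [hm, aux_zero] at h
    simpa using h
  unfold HasPartialDeriv
  refine (Tendsto.if' (p := fun h => listMin (List.ofFn
    ((fun _ => p) + h • (Pi.single i 1 : Fin (M + 1) → ℝ))) = p) hR hL).congr ?_
  intro h
  simp only [Function.comp_apply, h0, aux_eval]
  split_ifs with hc
  · rw [hc]; simp [slope_def_field, aux_zero]; ring
  · rw [(aux_min M p h i).resolve_left hc]; simp [slope_def_field, aux_zero]; ring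
end

section
/- Soundness of STL on the negation-free fragment: define is_stl (b : Bool) (x : ℝ) to hold iff (if b then 0 ≤ x else x < 0). Then for every negation-free LDL expression e of type Bool and every b : Bool, if is_stl b (⟦e⟧_STL) holds then ⟦e⟧_B = b. -/
open Real

/-! ### The (negation-free) LDL language -/

inductive LdlType where
  | real : LdlType
  | bool : LdlType
  | index : ℕ → LdlType
  | vector : ℕ → LdlType
  | func : ℕ → ℕ → LdlType

/-- Negation-free LDL expressions, intrinsically typed. -/
inductive Expr : LdlType → Type where
  | real : ℝ → Expr .real
  | bool : Bool → Expr .bool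
  | idx : {n : ℕ} → Fin n → Expr (.index n)
  | vec : {n : ℕ} → (Fin n → ℝ) → Expr (.vector n)
  | fn : {n m : ℕ} → ((Fin n → ℝ) → (Fin m → ℝ)) → Expr (.func n m)
  | app : {n m : ℕ} → Expr (.func n m) → Expr (.vector n) → Expr (.vector m)
  | lookup : {n : ℕ} → Expr (.vector n) → Expr (.index n) → Expr .real
  | le : Expr .real → Expr .real → Expr .bool
  | eq : Expr .real → Expr .real → Expr .bool
  | and : List (Expr .bool) → Expr .bool
  | or : List (Expr .bool) → Expr .bool

/-- Semantic domain of types for the boolean interpretation. -/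
@[reducible] def BSem : LdlType → Type
  | .real => ℝ
  | .bool => Bool
  | .index n => Fin n
  | .vector n => Fin n → ℝ
  | .func n m => (Fin n → ℝ) → (Fin m → ℝ)

/-- Semantic domain of types for real-valued interpretations. -/
@[reducible] def RSem : LdlType → Type
  | .real => ℝ
  | .bool => ℝ
  | .index n => Fin n
  | .vector n => Fin n → ℝ
  | .func n m => (Fin n → ℝ) → (Fin m → ℝ)

open Classical in
/-- The boolean interpretation `⟦·⟧_B` of LDL expressions. -/
noncomputable def boolSem : {t : LdlType} → Expr t → BSem t
  | _, .real r => r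
  | _, .bool b => b
  | _, .idx i => i
  | _, .vec v => v
  | _, .fn f => f
  | _, .app f v => boolSem f (boolSem v)
  | _, .lookup v i => boolSem v (boolSem i)
  | _, .le e₁ e₂ => decide (boolSem e₁ ≤ boolSem e₂)
  | _, .eq e₁ e₂ => decide (boolSem e₁ = boolSem e₂)
  | _, .and l => (l.attach.map fun x => boolSem x.1).all id
  | _, .or l => (l.attach.map fun x => boolSem x.1).any id
termination_by t e => sizeOf e
decreasing_by
  all_goals simp_wf
  all_goals first
    | omega
    | (have := List.sizeOf_lt_of_mem x.2; omega)

/-- The STL interpretation `⟦·⟧_STL` of LDL expressions (on empty conjunctions,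
resp. disjunctions, which the paper leaves unspecified, it returns the designated
true value `1`, resp. false value `-1`). -/
noncomputable def stlSem (ν : ℝ) : {t : LdlType} → Expr t → RSem t
  | _, .real r => r
  | _, .bool b => if b then 1 else -1
  | _, .idx i => i
  | _, .vec v => v
  | _, .fn f => f
  | _, .app f v => stlSem ν f (stlSem ν v)
  | _, .lookup v i => stlSem ν v (stlSem ν i)
  | _, .le e₁ e₂ => stlSem ν e₂ - stlSem ν e₁
  | _, .eq e₁ e₂ => -|stlSem ν e₂ - stlSem ν e₁|
  | _, .and l => if l.isEmpty then 1 else and_S ν (l.attach.map fun x => stlSem ν x.1)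
  | _, .or l => if l.isEmpty then -1 else or_S ν (l.attach.map fun x => stlSem ν x.1)
termination_by t e => sizeOf e
decreasing_by
  all_goals simp_wf
  all_goals first
    | omega
    | (have := List.sizeOf_lt_of_mem x.2; omega)

/-- `x` represents the boolean `b` in STL. -/
def is_stl (b : Bool) (x : ℝ) : Prop := if b then 0 ≤ x else x < 0

theorem aux_sum_pos (a : List ℝ) (ha : a ≠ []) (f : ℝ → ℝ) (hf : ∀ x ∈ a, 0 < f x) :
    0 < (a.map f).sum := by
  apply List.sum_pos
  · intro y hy
    obtain ⟨x, hx, rfl⟩ := List.mem_map.1 hy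
    exact hf x hx
  · simpa using ha

theorem aux_sum_neg (a : List ℝ) (ha : a ≠ []) (f : ℝ → ℝ) (hf : ∀ x ∈ a, f x < 0) :
    (a.map f).sum < 0 := by
  have h := aux_sum_pos a ha (fun x => - f x) (fun x hx => by linarith [hf x hx])
  have h2 : (a.map (fun x => - f x)).sum = - (a.map f).sum := by
    clear h hf ha
    induction a with
    | nil => simp
    | cons x l ih => simp only [List.map_cons, List.sum_cons, ih]; ring
  linarith

theorem aux_min_s16 (a : List ℝ) (ha : a ≠ []) : listMin a ∈ a ∧ ∀ x ∈ a, listMin a ≤ x := by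
  unfold listMin
  cases h : a.min? with
  | none => exact absurd (List.min?_eq_none_iff.1 h) ha
  | some m => exact List.min?_eq_some_iff.1 h

theorem aux_max (a : List ℝ) (ha : a ≠ []) : listMax a ∈ a ∧ ∀ x ∈ a, x ≤ listMax a := by
  unfold listMax
  cases h : a.max? with
  | none => exact absurd (List.max?_eq_none_iff.1 h) ha
  | some m => exact List.max?_eq_some_iff.1 h

theorem aux_and (ν : ℝ) (a : List ℝ) (ha : a ≠ []) :
    0 ≤ and_S ν a ↔ ∀ x ∈ a, 0 ≤ x := by
  obtain ⟨hm, hl⟩ := aux_min_s16 a ha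
  unfold and_S
  split_ifs with h1 h2
  · refine iff_of_false (not_le.2 ?_) (fun h => absurd (h _ hm) (not_le.2 h1))
    unfold stl_and_lt0
    exact div_neg_of_neg_of_pos
      (aux_sum_neg a ha _ fun x _ =>
        mul_neg_of_neg_of_pos (mul_neg_of_neg_of_pos h1 (exp_pos _)) (exp_pos _))
      (aux_sum_pos a ha _ fun x _ => exp_pos _)
  · refine iff_of_true ?_ (fun x hx => h2.le.trans (hl x hx))
    unfold stl_and_gt0
    exact (div_pos
      (aux_sum_pos a ha _ fun x hx => mul_pos (h2.trans_le (hl x hx)) (exp_pos _))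
      (aux_sum_pos a ha _ fun x _ => exp_pos _)).le
  · exact iff_of_true le_rfl (fun x hx => (not_lt.1 h1).trans (hl x hx))

theorem aux_or (ν : ℝ) (a : List ℝ) (ha : a ≠ []) :
    0 ≤ or_S ν a ↔ ∃ x ∈ a, 0 ≤ x := by
  obtain ⟨hm, hl⟩ := aux_max a ha
  unfold or_S
  split_ifs with h1 h2
  · refine iff_of_true ?_ ⟨_, hm, h1.le⟩
    exact (div_pos
      (aux_sum_pos a ha _ fun x hx => mul_pos (mul_pos h1 (exp_pos _)) (exp_pos _))
      (aux_sum_pos a ha _ fun x _ => exp_pos _)).le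
  · refine iff_of_false (not_le.2 ?_) ?_
    · exact div_neg_of_neg_of_pos
        (aux_sum_neg a ha _ fun x hx =>
          mul_neg_of_neg_of_pos ((hl x hx).trans_lt h2) (exp_pos _))
        (aux_sum_pos a ha _ fun x _ => exp_pos _)
    · rintro ⟨x, hx, h0⟩
      linarith [hl x hx]
  · exact iff_of_true le_rfl ⟨_, hm, not_lt.1 h2⟩

def AuxRel : (t : LdlType) → BSem t → RSem t → Prop
  | .real, x, y => x = y
  | .bool, x, y => (x = true ↔ 0 ≤ y)
  | .index _, x, y => x = y
  | .vector _, x, y => x = y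
  | .func _ _, x, y => x = y

theorem aux_main (ν : ℝ) : {t : LdlType} → (e : Expr t) → AuxRel t (boolSem e) (stlSem ν e)
  | _, .real r => by simp [AuxRel, boolSem, stlSem]
  | _, .bool b => by cases b <;> simp [AuxRel, boolSem, stlSem]
  | _, .idx i => by simp [AuxRel, boolSem, stlSem]
  | _, .vec v => by simp [AuxRel, boolSem, stlSem]
  | _, .fn f => by simp [AuxRel, boolSem, stlSem]
  | _, .app f v => by
    have h1 := aux_main ν f
    have h2 := aux_main ν v
    simp only [AuxRel] at h1 h2
    simp only [AuxRel, boolSem, stlSem, h1, h2]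
  | _, .lookup v i => by
    have h1 := aux_main ν v
    have h2 := aux_main ν i
    simp only [AuxRel] at h1 h2
    simp only [AuxRel, boolSem, stlSem, h1, h2]
  | _, .le e₁ e₂ => by
    have h1 := aux_main ν e₁
    have h2 := aux_main ν e₂
    simp only [AuxRel] at h1 h2
    simp [AuxRel, boolSem, stlSem, h1, h2]
  | _, .eq e₁ e₂ => by
    have h1 := aux_main ν e₁
    have h2 := aux_main ν e₂
    simp only [AuxRel] at h1 h2
    simp [AuxRel, boolSem, stlSem, h1, h2, sub_eq_zero, eq_comm]
  | _, .and l => by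
    have ih : ∀ x : {x // x ∈ l}, (boolSem x.1 = true ↔ 0 ≤ stlSem ν x.1) :=
      fun x => aux_main ν x.1
    simp only [AuxRel, boolSem, stlSem]
    by_cases hl : l = []
    · subst hl; simp
    · rw [if_neg (by simpa using hl), aux_and _ _ (by simpa using hl)]
      simp only [List.all_eq_true, List.mem_map, forall_exists_index, and_imp,
        forall_apply_eq_imp_iff₂, id, ih]
  | _, .or l => by
    have ih : ∀ x : {x // x ∈ l}, (boolSem x.1 = true ↔ 0 ≤ stlSem ν x.1) :=
      fun x => aux_main ν x.1
    simp only [AuxRel, boolSem, stlSem]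
    by_cases hl : l = []
    · subst hl; norm_num
    · rw [if_neg (by simpa using hl), aux_or _ _ (by simpa using hl)]
      simp only [List.any_eq_true, List.mem_map, exists_exists_and_eq_and, id, ih]
termination_by t e => sizeOf e
decreasing_by
  all_goals simp_wf
  all_goals first
    | omega
    | (have := List.sizeOf_lt_of_mem x.2; omega)

/-- Soundness of STL on the negation-free fragment of LDL. -/
theorem stl_soundness (ν : ℝ) (hν : 0 < ν) (e : Expr .bool) (b : Bool)
    (h : is_stl b (stlSem ν e)) : boolSem e = b := by
  have key : boolSem e = true ↔ 0 ≤ stlSem ν e := aux_main ν e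
  cases b with
  | true => exact key.2 (by simpa [is_stl] using h)
  | false =>
    have h' : stlSem ν e < 0 := by simpa [is_stl] using h
    exact Bool.eq_false_iff.2 (fun hb => absurd (key.1 hb) (not_le.2 h'))
end
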